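/- Let k ∈ (0,1). For every n ∈ ℕ, Kuznetsov's moment integrals satisfy the binomial convolution identity I_n^− = −4 Σ_{p=0}^{n} C(2n+1, 2p+1) I_p^+ I_{n−p}^+, where C(a,b) denotes the binomial coefficient. -/

import Mathlib

/-!
Put `w = (a + ib) / 2` and `v = (a - ib) / 2`, where `a = K` and `b = K'`. After `x = t²` the
denominators `cosh (bt) ∓ cos (at)` and `cosh (at) ∓ cos (bt)` factor into products of two
hyperbolic functions, of `-iwt` and `ivt` for the first and of `wt` and `vt` for the second.
Expanding both factors into geometric series turns the integrals into sums of powers of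
`(2l + 1) w + (2m + 1) v` over two adjacent quadrants, so that together they form a sum over a
half-plane. Lipschitz's formula evaluates the sum over `m ∈ ℤ`, and the remaining sum over `l` is
geometric. Thus `I⁺` and `I⁻` become Lambert-type series `∑ ± j ^ N / cosh (jκ)` over odd `j` and
`∑ ± j ^ N / sinh (jκ)` over even `j`, with `κ = -πiw / (2v)`.

The addition formula of `tanh` makes the sum of `1 / (cosh ((2r + 1) κ) cosh ((2s + 1) κ))` along an
antidiagonal `r + s + 1 = N` telescope to a multiple of `N / sinh (2Nκ)`. Multiplying by
`(2N) ^ m = ((2r + 1) + (2s + 1)) ^ m` and expanding binomially gives the convolution; the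
even-indexed moments of `1 / cosh` drop out by the symmetry `r ↦ -(r + 1)`.
-/

open MeasureTheory Real

/-- The complete elliptic integral of the first kind `K(k)`. -/
noncomputable def ellipticK (k : ℝ) : ℝ :=
  ∫ θ in (0 : ℝ)..(π / 2), (1 - k ^ 2 * Real.sin θ ^ 2) ^ (-(1 / 2) : ℝ)

/-- Kuznetsov's moment integral `I_n^+`, realizing
`(1/2)∫_ℝ x^n dx/(cos(√x K) + cosh(√x K'))` with `√x = i√(−x)` for `x < 0`. -/
noncomputable def Iplus (k : ℝ) (n : ℕ) : ℝ :=
  (1 / 2) * (∫ x in Set.Ioi (0 : ℝ), x ^ n /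
      (Real.cos (ellipticK k * Real.sqrt x) +
        Real.cosh (ellipticK (Real.sqrt (1 - k ^ 2)) * Real.sqrt x)))
  + ((-1 : ℝ) ^ n / 2) * (∫ x in Set.Ioi (0 : ℝ), x ^ n /
      (Real.cosh (ellipticK k * Real.sqrt x) +
        Real.cos (ellipticK (Real.sqrt (1 - k ^ 2)) * Real.sqrt x)))

/-- Kuznetsov's moment integral `I_n^−`, realizing
`∫_ℝ x^{n+1} dx/(cos(√x K) − cosh(√x K'))` with `√x = i√(−x)` for `x < 0`. -/
noncomputable def Iminus (k : ℝ) (n : ℕ) : ℝ :=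
  (∫ x in Set.Ioi (0 : ℝ), x ^ (n + 1) /
      (Real.cos (ellipticK k * Real.sqrt x) -
        Real.cosh (ellipticK (Real.sqrt (1 - k ^ 2)) * Real.sqrt x)))
  + (-1 : ℝ) ^ (n + 1) * (∫ x in Set.Ioi (0 : ℝ), x ^ (n + 1) /
      (Real.cosh (ellipticK k * Real.sqrt x) -
        Real.cos (ellipticK (Real.sqrt (1 - k ^ 2)) * Real.sqrt x)))

open Set

/-! ### Hyperbolic functions and exponential integrals -/

/-- The common form of `2 cosh` (`σ = -1`) and `2 sinh` (`σ = 1`); the sign is a parameter so that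
the integrals `I_n^+` and `I_n^-` can be treated together. -/
noncomputable def hyp (σ z : ℂ) : ℂ := Complex.exp z - σ * Complex.exp (-z)

lemma hyp_neg_one (z : ℂ) : hyp (-1) z = 2 * Complex.cosh z := by
  rw [Complex.two_cosh, hyp]; ring

lemma hyp_one (z : ℂ) : hyp 1 z = 2 * Complex.sinh z := by
  rw [Complex.two_sinh, hyp, one_mul]

lemma continuous_hyp (σ : ℂ) : Continuous (hyp σ) := by
  unfold hyp; fun_prop

lemma hasSum_one_div_hyp {σ z : ℂ} (hσ : ‖σ‖ ≤ 1) (hz : 0 < z.re) :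
    HasSum (fun l : ℕ => σ ^ l * Complex.exp (-((2 * l + 1) * z))) (1 / hyp σ z) := by
  have hlt : ‖σ * Complex.exp (-(2 * z))‖ < 1 := by
    rw [norm_mul, Complex.norm_exp]
    refine (mul_le_of_le_one_left (Real.exp_pos _).le hσ).trans_lt (Real.exp_lt_one_iff.mpr ?_)
    simpa using hz
  have hden : hyp σ z = Complex.exp z * (1 - σ * Complex.exp (-(2 * z))) := by
    rw [hyp, mul_sub, mul_one, mul_left_comm, ← Complex.exp_add]
    ring_nf
  convert! (hasSum_geometric_of_norm_lt_one hlt).mul_left (Complex.exp (-z)) using 1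
  · ext l
    rw [mul_pow, ← Complex.exp_nat_mul, mul_left_comm, ← Complex.exp_add]
    ring_nf
  · rw [hden, one_div, mul_inv, ← Complex.exp_neg z]

lemma two_mul_sinh_abs_re_le_norm_hyp {σ : ℂ} (hσ : ‖σ‖ = 1) (z : ℂ) :
    2 * Real.sinh |z.re| ≤ ‖hyp σ z‖ := by
  have hnorm : |Real.exp z.re - Real.exp (-z.re)| ≤ ‖hyp σ z‖ := by
    simpa [hyp, hσ, Complex.norm_exp] using
      abs_norm_sub_norm_le (Complex.exp z) (σ * Complex.exp (-z))
  rwa [← Real.abs_sinh, ← abs_two, ← abs_mul, Real.sinh_eq, mul_div_cancel₀ _ two_ne_zero]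

lemma abs_re_le_norm_mul_norm_cosh (z : ℂ) : |z.re| ≤ ‖z‖ * ‖Complex.cosh z‖ := by
  have hcosh : ‖Complex.cosh z‖ ^ 2 = Real.cos z.im ^ 2 + Real.sinh z.re ^ 2 := by
    rw [← Complex.re_add_im z, Complex.cosh_add, Complex.cosh_mul_I, Complex.sinh_mul_I,
      ← mul_assoc]
    norm_cast
    rw [Complex.sq_norm, Complex.re_add_im, Complex.normSq_add_mul_I]
    linear_combination Real.cos z.im ^ 2 * Real.cosh_sq z.re +
      Real.sinh z.re ^ 2 * Real.sin_sq_add_cos_sq z.im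
  have hcos : 1 - z.im ^ 2 ≤ Real.cos z.im ^ 2 := by
    rw [Real.cos_sq']
    have := sq_le_sq.mpr (Real.abs_sin_le_abs (x := z.im))
    linarith
  have hsinh : z.re ^ 2 ≤ Real.sinh z.re ^ 2 := by
    rw [sq_le_sq, Real.abs_sinh]
    exact Real.self_le_sinh_iff.mpr (abs_nonneg _)
  refine abs_le_of_sq_le_sq ?_ (by positivity)
  rw [mul_pow, hcosh, Complex.sq_norm, Complex.normSq_apply]
  nlinarith [mul_nonneg (sq_nonneg z.re) (sq_nonneg z.re)]

lemma norm_pow_mul_cexp (n : ℕ) (c : ℂ) {t : ℝ} (ht : 0 < t) :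
    ‖(t : ℂ) ^ n * Complex.exp (-(c * t))‖ = t ^ n * Real.exp (-(c.re * t)) := by
  simp [Complex.norm_exp, abs_of_pos ht]

lemma integrableOn_pow_mul_exp (n : ℕ) {c : ℝ} (hc : 0 < c) :
    IntegrableOn (fun t : ℝ => t ^ n * Real.exp (-(c * t))) (Ioi 0) := by
  simpa using integrableOn_rpow_mul_exp_neg_mul_rpow (s := n) (p := 1)
    (by linarith [n.cast_nonneg (α := ℝ)]) one_pos hc

lemma integral_pow_mul_exp (n : ℕ) {c : ℝ} (hc : 0 < c) :
    ∫ t in Ioi (0 : ℝ), t ^ n * Real.exp (-(c * t)) = n.factorial / c ^ (n + 1) := by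
  have h := Real.integral_rpow_mul_exp_neg_mul_Ioi (a := n + 1) n.cast_add_one_pos hc
  simp only [add_sub_cancel_right, Real.rpow_natCast, Real.Gamma_nat_eq_factorial] at h
  rw [h, ← Nat.cast_succ, Real.rpow_natCast, one_div, inv_pow, div_eq_inv_mul]

lemma integrableOn_pow_mul_cexp (n : ℕ) {c : ℂ} (hc : 0 < c.re) :
    IntegrableOn (fun t : ℝ => (t : ℂ) ^ n * Complex.exp (-(c * t))) (Ioi 0) :=
  (integrableOn_pow_mul_exp n hc).mono'
    (by fun_prop : Continuous fun t : ℝ =>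
      (t : ℂ) ^ n * Complex.exp (-(c * t))).aestronglyMeasurable
    ((ae_restrict_mem measurableSet_Ioi).mono fun _ ht => (norm_pow_mul_cexp n c ht).le)

lemma integral_pow_mul_cexp (n : ℕ) {c : ℂ} (hc : 0 < c.re) :
    ∫ t in Ioi (0 : ℝ), (t : ℂ) ^ n * Complex.exp (-(c * t)) = n.factorial / c ^ (n + 1) := by
  have hc0 : c ≠ 0 := by rintro rfl; simp at hc
  induction n with
  | zero => simpa [neg_mul] using integral_exp_mul_complex_Ioi (a := -c) (by simpa using hc) 0
  | succ n ih =>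
    have hderiv (t : ℝ) : HasDerivAt (fun t : ℝ => (t : ℂ) ^ (n + 1) * Complex.exp (-(c * t)))
        ((n + 1) * ((t : ℂ) ^ n * Complex.exp (-(c * t))) -
          c * ((t : ℂ) ^ (n + 1) * Complex.exp (-(c * t)))) t := by
      convert! ((hasDerivAt_pow (n + 1) (t : ℂ)).mul
        (((hasDerivAt_id (t : ℂ)).const_mul c).neg).cexp).comp_ofReal using 1
      simp
      ring
    have hint := (integrableOn_pow_mul_cexp n hc).const_mul ((n : ℂ) + 1)
    have hint' := (integrableOn_pow_mul_cexp (n + 1) hc).const_mul c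
    have hFTC := integral_Ioi_of_hasDerivAt_of_tendsto (hderiv 0).continuousAt.continuousWithinAt
      (fun t _ => hderiv t) (hint.sub hint')
      (tendsto_zero_of_hasDerivAt_of_integrableOn_Ioi (fun t _ => hderiv t) (hint.sub hint')
        (integrableOn_pow_mul_cexp (n + 1) hc))
    rw [integral_sub hint hint', integral_const_mul, integral_const_mul, ih, Complex.ofReal_zero,
      zero_pow n.succ_ne_zero, zero_mul, sub_zero] at hFTC
    rw [Nat.factorial_succ, eq_div_iff (pow_ne_zero _ hc0)]
    field_simp at hFTC
    push_cast
    linear_combination -hFTC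

/-! ### Expansion of the integrals over quadrants -/

lemma two_mul_add_one_injective : Function.Injective fun l : ℕ => 2 * l + 1 :=
  fun _ _ h => by simpa using h

lemma summable_one_div_odd_pow {k : ℕ} (hk : 1 < k) :
    Summable fun l : ℕ => 1 / (2 * l + 1 : ℝ) ^ k := by
  simpa [Function.comp_def] using
    (Real.summable_one_div_nat_pow.mpr hk).comp_injective two_mul_add_one_injective

theorem hasSum_integral_div_hyp {F : ℝ → ℂ} {σ q : ℂ} {C : ℝ} {M : ℕ}
    (hF : AEStronglyMeasurable F (volume.restrict (Ioi 0))) (hσ : ‖σ‖ = 1) (hq : 0 < q.re)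
    (hM : 1 ≤ M) (hbound : ∀ t : ℝ, 0 < t → ‖F t‖ ≤ C * t ^ M) :
    HasSum (fun l : ℕ => σ ^ l * ∫ t in Ioi (0 : ℝ), Complex.exp (-((2 * l + 1) * (q * t))) * F t)
      (∫ t in Ioi (0 : ℝ), F t / hyp σ (q * t)) := by
  set f : ℕ → ℝ → ℂ := fun l t => σ ^ l * (Complex.exp (-((2 * l + 1) * (q * t))) * F t)
  have hrate (l : ℕ) : 0 < (2 * l + 1) * q.re := by positivity
  have hf (l : ℕ) : AEStronglyMeasurable (f l) (volume.restrict (Ioi 0)) :=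
    ((by fun_prop : Continuous fun t : ℝ =>
      Complex.exp (-((2 * l + 1) * (q * t)))).aestronglyMeasurable.mul hF).const_mul _
  have hle (l : ℕ) : ∀ᵐ t ∂volume.restrict (Ioi (0 : ℝ)),
      ‖f l t‖ ≤ C * (t ^ M * Real.exp (-((2 * l + 1) * q.re * t))) := by
    filter_upwards [ae_restrict_mem measurableSet_Ioi] with t ht
    have hexp : ‖Complex.exp (-((2 * l + 1) * (q * t)))‖ =
        Real.exp (-((2 * l + 1) * q.re * t)) := by
      rw [Complex.norm_exp]
      congr 1
      simp [mul_assoc]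
    rw [norm_mul, norm_mul, norm_pow, hσ, one_pow, one_mul, hexp, mul_comm, ← mul_assoc]
    gcongr
    exact hbound t ht
  have hmaj (l : ℕ) := (integrableOn_pow_mul_exp M (hrate l)).const_mul C
  have hint (l : ℕ) : IntegrableOn (f l) (Ioi 0) := (hmaj l).mono' (hf l) (hle l)
  have hnorm (l : ℕ) : ∫ t in Ioi (0 : ℝ), ‖f l t‖ ≤
      C * M.factorial / q.re ^ (M + 1) * (1 / (2 * l + 1 : ℝ) ^ (M + 1)) := by
    refine (integral_mono_ae (hint l).norm (hmaj l) (hle l)).trans_eq ?_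
    rw [integral_const_mul, integral_pow_mul_exp M (hrate l), mul_pow,
      div_mul_div_comm, mul_one, mul_comm (q.re ^ _), mul_div_assoc]
  have hsum := hasSum_integral_of_summable_integral_norm hint
    (.of_nonneg_of_le (fun _ => integral_nonneg fun _ => norm_nonneg _) hnorm
      ((summable_one_div_odd_pow (by omega)).mul_left _))
  convert! hsum using 1
  · simp only [f, integral_const_mul]
  · refine setIntegral_congr_fun measurableSet_Ioi fun t ht => ?_
    have hexpand := (hasSum_one_div_hyp hσ.le (z := q * t)
      (by simpa using mul_pos hq ht)).mul_right (F t)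
    simp only [f, ← mul_assoc (σ ^ _), hexpand.tsum_eq, one_div_mul_eq_div]

/-- The integral `∫₀^∞ tⁿ / (hyp σ (pt) · hyp σ (qt)) dt`, to which the substitution `x = t²`
reduces the moment integrals. -/
noncomputable def hypIntegral (σ p q : ℂ) (n : ℕ) : ℂ :=
  ∫ t in Ioi (0 : ℝ), (t : ℂ) ^ n / (hyp σ (p * t) * hyp σ (q * t))

lemma exists_norm_pow_div_hyp_le {σ q : ℂ} {n : ℕ} (hσ : σ ^ 2 = 1) (hq : 0 < q.re) (hn : 1 ≤ n)
    (hn' : σ = 1 → 2 ≤ n) :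
    ∃ (C : ℝ) (M : ℕ), 1 ≤ M ∧ ∀ t : ℝ, 0 < t → ‖(t : ℂ) ^ n / hyp σ (q * t)‖ ≤ C * t ^ M := by
  rcases sq_eq_one_iff.mp hσ with rfl | rfl
  · refine ⟨1 / (2 * q.re), n - 1, by have := hn' rfl; omega, fun t ht => ?_⟩
    have hsinh : 2 * (q.re * t) ≤ ‖hyp 1 (q * t)‖ := by
      refine le_trans ?_ (two_mul_sinh_abs_re_le_norm_hyp norm_one _)
      simpa [abs_of_pos, hq, ht] using (mul_pos hq ht).le
    calc ‖(t : ℂ) ^ n / hyp 1 (q * t)‖ = t ^ n / ‖hyp 1 (q * t)‖ := by simp [abs_of_pos ht]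
      _ ≤ t ^ n / (2 * (q.re * t)) := by gcongr
      _ = 1 / (2 * q.re) * t ^ (n - 1) := by
        rw [← Nat.sub_add_cancel hn, pow_succ]
        field_simp
        simp
  · refine ⟨‖q‖ / (2 * q.re), n, hn, fun t ht => ?_⟩
    have hcosh : q.re ≤ ‖q‖ * ‖Complex.cosh (q * t)‖ := by
      have h := abs_re_le_norm_mul_norm_cosh (q * t)
      rw [Complex.re_mul_ofReal, abs_of_pos (mul_pos hq ht), norm_mul, Complex.norm_of_nonneg ht.le,
        mul_right_comm] at h
      exact le_of_mul_le_mul_right h ht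
    have hpos : 0 < ‖Complex.cosh (q * t)‖ :=
      pos_of_mul_pos_right (hq.trans_le hcosh) (norm_nonneg q)
    calc ‖(t : ℂ) ^ n / hyp (-1) (q * t)‖ = t ^ n / (2 * ‖Complex.cosh (q * t)‖) := by
          simp [hyp_neg_one, abs_of_pos ht]
      _ ≤ ‖q‖ / (2 * q.re) * t ^ n := by
        rw [div_mul_eq_mul_div, div_le_div_iff₀ (by positivity) (by positivity)]
        linarith [mul_le_mul_of_nonneg_left hcosh (pow_pos ht n).le]

lemma hasSum_integral_exp_mul_pow_div_hyp {σ c q : ℂ} {n : ℕ} (hσ : ‖σ‖ = 1) (hc : 0 ≤ c.re)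
    (hq : 0 < q.re) (hn : 1 ≤ n) :
    HasSum (fun m : ℕ => σ ^ m * (n.factorial / (c + (2 * m + 1) * q) ^ (n + 1)))
      (∫ t in Ioi (0 : ℝ), Complex.exp (-(c * t)) * (t : ℂ) ^ n / hyp σ (q * t)) := by
  have hbound (t : ℝ) (ht : 0 < t) : ‖Complex.exp (-(c * t)) * (t : ℂ) ^ n‖ ≤ 1 * t ^ n := by
    rw [mul_comm, norm_pow_mul_cexp n c ht, mul_comm]
    gcongr
    rw [Real.exp_le_one_iff, neg_nonpos]
    positivity
  convert! hasSum_integral_div_hyp (by fun_prop : Continuous fun t : ℝ =>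
    Complex.exp (-(c * t)) * (t : ℂ) ^ n).aestronglyMeasurable hσ hq hn hbound using 2 with m
  have hre : 0 < (c + (2 * m + 1) * q).re := by
    have : (0 : ℝ) < (2 * m + 1) * q.re := by positivity
    simpa using add_pos_of_nonneg_of_pos hc this
  rw [← integral_pow_mul_cexp n hre]
  refine congrArg _ (integral_congr_ae (ae_of_all _ fun t => ?_))
  simp only [← mul_assoc, ← Complex.exp_add]
  ring_nf

lemma hasSum_hypIntegral {σ p q : ℂ} {n : ℕ} (hσ : σ ^ 2 = 1) (hp : 0 < p.re) (hq : 0 < q.re)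
    (hn : 1 ≤ n) (hn' : σ = 1 → 2 ≤ n) :
    HasSum (fun l : ℕ => σ ^ l * ∑' m : ℕ, σ ^ m *
        (n.factorial / ((2 * l + 1) * p + (2 * m + 1) * q) ^ (n + 1)))
      (hypIntegral σ p q n) := by
  have hσ' : ‖σ‖ = 1 := Complex.norm_eq_one_of_pow_eq_one hσ two_ne_zero
  obtain ⟨C, M, hM, hbound⟩ := exists_norm_pow_div_hyp_le hσ hq hn hn'
  have hmeas : AEStronglyMeasurable (fun t : ℝ => (t : ℂ) ^ n / hyp σ (q * t))
      (volume.restrict (Ioi 0)) :=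
    ((by fun_prop : Measurable fun t : ℝ => (t : ℂ) ^ n).div
      ((continuous_hyp σ).measurable.comp (by fun_prop))).aestronglyMeasurable
  convert! hasSum_integral_div_hyp hmeas hσ' hp hM hbound using 1
  · ext l
    rw [(hasSum_integral_exp_mul_pow_div_hyp (c := (2 * l + 1) * p) hσ' _ hq hn).tsum_eq]
    · simp only [mul_div_assoc, mul_assoc]
    · have : (0 : ℝ) ≤ (2 * l + 1) * p.re := by positivity
      simpa using this
  · simp only [hypIntegral, div_div, mul_comm (hyp σ (p * _))]

/-! ### Lipschitz's formula with a sign twist -/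

lemma hasSum_int_of_even_of_odd {f : ℤ → ℂ} {a b : ℂ} (he : HasSum (fun m : ℤ => f (2 * m)) a)
    (ho : HasSum (fun m : ℤ => f (2 * m + 1)) b) : HasSum f (a + b) := by
  have hinj : Function.Injective fun m : ℤ => 2 * m := fun _ _ h => by simpa using h
  have hinj' : Function.Injective fun m : ℤ => 2 * m + 1 := fun _ _ h => by simpa using h
  have hcompl : IsCompl (range fun m : ℤ => 2 * m) (range fun m : ℤ => 2 * m + 1) := by
    simpa using Int.isCompl_even_odd
  exact .add_isCompl hcompl (hinj.hasSum_range_iff.mpr he) (hinj'.hasSum_range_iff.mpr ho)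

lemma hasSum_lipschitz {z : ℂ} (hz : 0 < z.im) {n : ℕ} (hn : 1 ≤ n) :
    HasSum (fun m : ℤ => 1 / (z + m) ^ (n + 1)) ((-2 * π * Complex.I) ^ (n + 1) / n.factorial *
      ∑' j : ℕ, (j : ℂ) ^ n * Complex.exp (2 * π * Complex.I * z) ^ j) := by
  rw [← EisensteinSeries.qExpansion_identity hn ⟨z, hz⟩]
  refine Summable.hasSum ((EisensteinSeries.linear_right_summable z 1 (k := n + 1)
    (by omega)).congr fun m => ?_)
  rw [Int.cast_one, one_mul, one_div]
  norm_cast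

/-- The twist by `σ ^ m` is trivial on even `m` and multiplies odd `m` by `σ`; on these two classes
the Lipschitz formula applies at `z / 2` and `(z + 1) / 2`. -/
lemma hasSum_lipschitz_twist {σ z : ℂ} (hσ : σ ^ 2 = 1) (hz : 0 < z.im) {n : ℕ} (hn : 1 ≤ n) :
    HasSum (fun m : ℤ => σ ^ m / (z + m) ^ (n + 1)) ((-π * Complex.I) ^ (n + 1) / n.factorial *
      ∑' j : ℕ, (1 + σ * (-1) ^ j) * (j : ℂ) ^ n * Complex.exp (π * Complex.I * z) ^ j) := by
  have hz' : 0 < (z / 2).im := by simpa using hz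
  have hσ0 : σ ≠ 0 := by rintro rfl; simp at hσ
  have hσ2 (m : ℤ) : σ ^ (2 * m) = 1 := by
    rw [zpow_mul, zpow_ofNat, hσ, one_zpow]
  set Y := Complex.exp (π * Complex.I * z) with hY
  have heven := hasSum_lipschitz hz' hn
  have hodd := hasSum_lipschitz (z := (z + 1) / 2) (by simpa using hz) hn
  have hY1 : Complex.exp (2 * π * Complex.I * (z / 2)) = Y := by
    rw [hY]; congr 1; ring
  have hY2 : Complex.exp (2 * π * Complex.I * ((z + 1) / 2)) = -Y := by
    rw [show 2 * π * Complex.I * ((z + 1) / 2) = π * Complex.I * z + π * Complex.I by ring,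
      Complex.exp_add, Complex.exp_pi_mul_I, mul_neg_one]
  have hYlt : ‖Y‖ < 1 := hY1 ▸ UpperHalfPlane.norm_exp_two_pi_I_lt_one ⟨z / 2, hz'⟩
  rw [hY1] at heven
  rw [hY2] at hodd
  have hsum (y : ℂ) (hy : ‖y‖ < 1) := summable_pow_mul_geometric_of_norm_lt_one n hy
  convert! hasSum_int_of_even_of_odd
    ((heven.mul_left ((1 / 2) ^ (n + 1))).congr_fun fun m => ?_)
    ((hodd.mul_left (σ * (1 / 2) ^ (n + 1))).congr_fun fun m => ?_) using 1
  · have hsplit (j : ℕ) : (1 + σ * (-1) ^ j) * (j : ℂ) ^ n * Y ^ j =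
        (j : ℂ) ^ n * Y ^ j + σ * ((j : ℂ) ^ n * (-Y) ^ j) := by
      rw [neg_pow Y]; ring
    have htwo : (-2 * π * Complex.I) ^ (n + 1) = 2 ^ (n + 1) * (-π * Complex.I) ^ (n + 1) := by
      rw [← mul_pow]; congr 1; ring
    simp_rw [hsplit]
    rw [(hsum Y hYlt).tsum_add ((hsum (-Y) (by rwa [norm_neg])).mul_left σ), tsum_mul_left, htwo,
      one_div, inv_pow]
    field_simp
  · rw [hσ2, show z + (2 * m : ℤ) = 2 * (z / 2 + m) by push_cast; ring, mul_pow, one_div_pow,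
      one_div_mul_one_div]
  · rw [zpow_add_one₀ hσ0, hσ2, show z + (2 * m + 1 : ℤ) = 2 * ((z + 1) / 2 + m) by push_cast; ring,
      mul_pow, one_div_pow, mul_assoc, one_div_mul_one_div, one_mul, mul_one_div]

lemma hasSum_lipschitz_odd_multiples {σ z v : ℂ} (hσ : σ ^ 2 = 1) (hz : 0 < (z / v).im) {n : ℕ}
    (hn : 1 ≤ n) :
    HasSum (fun m : ℤ => σ ^ m * (n.factorial / (z + (2 * m + 1) * v) ^ (n + 1)))
      ((-π * Complex.I / (2 * v)) ^ (n + 1) * ∑' j : ℕ, (1 + σ * (-1) ^ j) * (j : ℂ) ^ n *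
        (Complex.I * Complex.exp (π * Complex.I * z / (2 * v))) ^ j) := by
  have hv : v ≠ 0 := by rintro rfl; simp at hz
  have hshift : (z + v) / (2 * v) = (z / v + 1) / 2 := by field_simp
  have hexp : Complex.exp (π * Complex.I * ((z + v) / (2 * v))) =
      Complex.I * Complex.exp (π * Complex.I * z / (2 * v)) := by
    rw [show π * Complex.I * ((z + v) / (2 * v)) =
      π / 2 * Complex.I + π * Complex.I * z / (2 * v) by field_simp; ring, Complex.exp_add,
      Complex.exp_pi_div_two_mul_I]
  convert! (hasSum_lipschitz_twist (z := (z + v) / (2 * v)) hσ (by simpa [hshift] using hz)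
    hn).mul_left (n.factorial / (2 * v) ^ (n + 1)) using 1
  · ext m
    rw [show z + (2 * m + 1) * v = 2 * v * ((z + v) / (2 * v) + m) by field_simp; ring,
      mul_pow, mul_div_left_comm, div_mul_div_comm, mul_div_assoc]
  · have := n.factorial_ne_zero
    rw [hexp, div_pow]
    field_simp

/-! ### From quadrant sums to Lambert series -/

lemma div_im_pos_of_im_neg {z v : ℂ} (hz : 0 < z.re) (hz' : 0 < z.im) (hv : 0 < v.re)
    (hv' : v.im < 0) : 0 < (z / v).im := by
  rw [Complex.div_im, ← sub_div]
  refine div_pos ?_ (Complex.normSq_pos.mpr (by rintro rfl; simp at hv))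
  nlinarith [mul_pos hz' hv, mul_pos hz (neg_pos.mpr hv')]

lemma neg_pi_mul_I_mul_div_re_pos {w v : ℂ} (hw : 0 < w.re) (hw' : 0 < w.im) (hv : 0 < v.re)
    (hv' : v.im < 0) : 0 < (-π * Complex.I * w / (2 * v)).re := by
  rw [show -π * Complex.I * w / (2 * v) = (π / 2 : ℝ) * (-Complex.I * (w / v)) by push_cast; ring,
    Complex.re_ofReal_mul]
  simpa using mul_pos pi_div_two_pos (div_im_pos_of_im_neg hw hw' hv hv')

lemma I_pow_two_mul_add_two (N : ℕ) : Complex.I ^ (2 * N + 2) = (-1) ^ (N + 1) := by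
  rw [show 2 * N + 2 = 2 * (N + 1) by ring, pow_mul, Complex.I_sq]

lemma twisted_term_neg_add_one {σ : ℂ} (hσ : σ ^ 2 = 1) (z v c : ℂ) (N m : ℕ) :
    σ ^ (-(m + 1 : ℤ)) * (c / (z + (2 * (-(m + 1 : ℤ) : ℤ) + 1) * v) ^ (2 * N + 2)) =
      σ * (-1) ^ (N + 1) *
        (σ ^ m * (c / (-Complex.I * z + (2 * m + 1) * (Complex.I * v)) ^ (2 * N + 2))) := by
  have hσinv : σ⁻¹ = σ := inv_eq_of_mul_eq_one_left (by rwa [← sq])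
  have hbase : z + (2 * (-(m + 1 : ℤ) : ℤ) + 1) * v =
      Complex.I * (-Complex.I * z + (2 * m + 1) * (Complex.I * v)) := by
    push_cast
    linear_combination (z - (2 * m + 1) * v) * Complex.I_sq
  have hsign : ((-1 : ℂ) ^ (N + 1))⁻¹ = (-1) ^ (N + 1) := by rw [← inv_pow, inv_neg_one]
  rw [hbase, mul_pow, I_pow_two_mul_add_two, zpow_neg, ← inv_zpow, hσinv, ← Nat.cast_succ,
    zpow_natCast, pow_succ, mul_comm ((-1) ^ (N + 1)), div_mul_eq_div_div,
    div_eq_mul_inv _ ((-1) ^ _), hsign]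
  ring

/-- Reflecting `m` to `-(m + 1)` rotates the terms with `m < 0` by `I`; the two quadrant sums are
thereby the two halves of the sum over `m : ℤ` that the Lipschitz formula evaluates. -/
lemma tsum_quadrant_sub {σ z v : ℂ} (hσ : σ ^ 2 = 1) (hz : 0 < z.re) (hz' : 0 < z.im)
    (hv : 0 < v.re) (hv' : v.im < 0) (N : ℕ) :
    ∑' m : ℕ, σ ^ m * ((2 * N + 1).factorial /
        (-Complex.I * z + (2 * m + 1) * (Complex.I * v)) ^ (2 * N + 2)) -
      σ * (-1) ^ N * ∑' m : ℕ, σ ^ m * ((2 * N + 1).factorial /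
        (z + (2 * m + 1) * v) ^ (2 * N + 2)) =
      σ * (π / (2 * v)) ^ (2 * N + 2) * ∑' j : ℕ, (1 + σ * (-1) ^ j) * (j : ℂ) ^ (2 * N + 1) *
        (Complex.I * Complex.exp (π * Complex.I * z / (2 * v))) ^ j := by
  have hσ' := Complex.norm_eq_one_of_pow_eq_one hσ two_ne_zero
  have hpos := (hasSum_integral_exp_mul_pow_div_hyp (n := 2 * N + 1) hσ' hz.le hv
    (by omega)).summable.hasSum
  have hneg := (hasSum_integral_exp_mul_pow_div_hyp (n := 2 * N + 1) (c := -Complex.I * z)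
    (q := Complex.I * v) hσ' (by simpa using hz'.le) (by simpa using hv')
    (by omega)).summable.hasSum
  have hhalves := HasSum.of_nat_of_neg_add_one
    (f := fun m : ℤ => σ ^ m * ((2 * N + 1).factorial / (z + (2 * m + 1) * v) ^ (2 * N + 2)))
    (by simpa using hpos)
    ((hneg.mul_left (σ * (-1) ^ (N + 1))).congr_fun (twisted_term_neg_add_one hσ z v _ N))
  have hlip := hhalves.unique (hasSum_lipschitz_odd_multiples hσ
    (div_im_pos_of_im_neg hz hz' hv hv') (n := 2 * N + 1) (by omega))
  have hpow : (-π * Complex.I / (2 * v)) ^ (2 * N + 2) =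
      (-1) ^ (N + 1) * (π / (2 * v)) ^ (2 * N + 2) := by
    rw [← I_pow_two_mul_add_two, ← mul_pow, ← Even.neg_pow ⟨N + 1, by ring⟩]
    ring
  have hsolve (S T L s : ℂ) (hs : s * s = 1) (h : T + σ * (s * -1) * S = s * -1 * L) :
      S - σ * s * T = σ * L := by
    linear_combination (-σ * s) * h - S * s * s * hσ + (σ * L - S) * hs
  rw [hpow, pow_succ (-1 : ℂ), mul_assoc (_ * -1)] at hlip
  rw [mul_assoc σ ((π / (2 * v)) ^ _)]
  exact hsolve _ _ _ _ (by rw [← mul_pow, neg_one_mul, neg_neg, one_pow]) hlip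

theorem tsum_mul_tsum_exp_eq_tsum_div_hyp {σ κ : ℂ} (hσ : ‖σ‖ ≤ 1) (hκ : 0 < κ.re) {c : ℕ → ℂ}
    (hc0 : c 0 = 0) (hc : Summable fun j => ‖c j‖ * Real.exp (-κ.re) ^ j) :
    ∑' l : ℕ, σ ^ l * ∑' j : ℕ, c j * Complex.exp (-((2 * l + 1) * (j * κ))) =
      ∑' j : ℕ, c j / hyp σ (j * κ) := by
  set ρ := Real.exp (-κ.re) with hρ
  have hρ1 : ρ < 1 := Real.exp_lt_one_iff.mpr (by simpa using hκ)
  have hnorm (l j : ℕ) : ‖Complex.exp (-((2 * l + 1) * (j * κ)))‖ = ρ ^ ((2 * l + 1) * j) := by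
    rw [Complex.norm_exp, hρ, ← Real.exp_nat_mul]
    congr 1
    simp [← mul_assoc]
  have hgeom : Summable fun l : ℕ => ρ ^ l := summable_geometric_of_lt_one (Real.exp_pos _).le hρ1
  let f (l j : ℕ) : ℂ := σ ^ l * (c j * Complex.exp (-((2 * l + 1) * (j * κ))))
  have hf : Summable (Function.uncurry f) := by
    refine .of_norm_bounded (hgeom.mul_of_nonneg hc
      (fun _ => by positivity) (fun _ => by positivity)) ?_
    rintro ⟨l, j⟩
    rcases Nat.eq_zero_or_pos j with rfl | hj
    · simp [f, hc0]
    calc ‖f l j‖ ≤ 1 * (‖c j‖ * ρ ^ (l + j)) := by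
          rw [norm_mul, norm_mul, norm_pow, hnorm]
          gcongr ?_ * (_ * ?_)
          · exact pow_le_one₀ (norm_nonneg _) hσ
          · exact pow_le_pow_of_le_one (Real.exp_pos _).le hρ1.le (by nlinarith)
      _ = ρ ^ l * (‖c j‖ * ρ ^ j) := by ring
  calc ∑' l : ℕ, σ ^ l * ∑' j : ℕ, c j * Complex.exp (-((2 * l + 1) * (j * κ)))
      = ∑' l, ∑' j, f l j := tsum_congr fun l => tsum_mul_left.symm
    _ = ∑' j, ∑' l, f l j := hf.tsum_comm.symm
    _ = ∑' j : ℕ, c j / hyp σ (j * κ) := tsum_congr fun j => ?_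
  rcases Nat.eq_zero_or_pos j with rfl | hj
  · simp [f, hc0]
  have hexpand := (hasSum_one_div_hyp hσ (z := j * κ) (by
    simpa using mul_pos (Nat.cast_pos.mpr hj) hκ)).mul_left (c j)
  rw [div_eq_mul_one_div, ← hexpand.tsum_eq]
  exact tsum_congr fun l => mul_left_comm _ _ _

/-- The series `∑ (1 + σ (-1) ^ j) I ^ j j ^ n / hyp σ (j κ)`, which runs over odd `j` for `σ = -1`
and over even `j` for `σ = 1`. The summand at `j = 0` has denominator `0` if `σ = 1` and is then `0`
by convention. -/
noncomputable def lambertSum (σ κ : ℂ) (n : ℕ) : ℂ :=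
  ∑' j : ℕ, (1 + σ * (-1) ^ j) * Complex.I ^ j * (j : ℂ) ^ n / hyp σ (j * κ)

lemma summable_lambert_coeff {σ : ℂ} (hσ : ‖σ‖ = 1) {ρ : ℝ} (hρ : 0 ≤ ρ) (hρ' : ρ < 1) (n : ℕ) :
    Summable fun j : ℕ => ‖(1 + σ * (-1) ^ j) * Complex.I ^ j * (j : ℂ) ^ n‖ * ρ ^ j := by
  have hmaj := (summable_pow_mul_geometric_of_norm_lt_one (r := ρ) n
    (by rwa [Real.norm_of_nonneg hρ])).mul_left 2
  refine .of_nonneg_of_le (fun j => by positivity) (fun j => ?_) hmaj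
  have hle : ‖1 + σ * (-1) ^ j‖ ≤ 2 := (norm_add_le _ _).trans (by simp [hσ]; norm_num)
  simp only [norm_mul, norm_pow, Complex.norm_I, one_pow, mul_one, Complex.norm_natCast]
  rw [mul_assoc]
  gcongr

theorem hypIntegral_sub {σ w v : ℂ} {N : ℕ} (hσ : σ ^ 2 = 1) (hw : 0 < w.re) (hw' : 0 < w.im)
    (hv : 0 < v.re) (hv' : v.im < 0) (hN : σ = 1 → 1 ≤ N) :
    hypIntegral σ (-Complex.I * w) (Complex.I * v) (2 * N + 1) -
        σ * (-1) ^ N * hypIntegral σ w v (2 * N + 1) =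
      σ * (π / (2 * v)) ^ (2 * N + 2) *
        lambertSum σ (-π * Complex.I * w / (2 * v)) (2 * N + 1) := by
  have hσ' := Complex.norm_eq_one_of_pow_eq_one hσ two_ne_zero
  have hn (h : σ = 1) : 2 ≤ 2 * N + 1 := by have := hN h; omega
  set κ := -π * Complex.I * w / (2 * v) with hκdef
  have hκ : 0 < κ.re := neg_pi_mul_I_mul_div_re_pos hw hw' hv hv'
  have hdiff := (hasSum_hypIntegral (p := -Complex.I * w) (q := Complex.I * v) hσ
    (by simpa using hw') (by simpa using hv') (by omega) hn).sub
    ((hasSum_hypIntegral hσ hw hv (by omega) hn).mul_left (σ * (-1) ^ N))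
  rw [← hdiff.tsum_eq, lambertSum, ← tsum_mul_tsum_exp_eq_tsum_div_hyp hσ'.le hκ (by simp)
    (summable_lambert_coeff hσ' (Real.exp_pos _).le
      (Real.exp_lt_one_iff.mpr (neg_neg_of_pos hκ)) _), ← tsum_mul_left]
  refine tsum_congr fun l => ?_
  have hl : (0 : ℝ) < 2 * l + 1 := by positivity
  have hrow := tsum_quadrant_sub (z := (2 * l + 1) * w) hσ (by simpa using mul_pos hl hw)
    (by simpa using mul_pos hl hw') hv hv' N
  have hterm (j : ℕ) : (1 + σ * (-1) ^ j) * (j : ℂ) ^ (2 * N + 1) *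
      (Complex.I * Complex.exp (π * Complex.I * ((2 * l + 1) * w) / (2 * v))) ^ j =
      (1 + σ * (-1) ^ j) * Complex.I ^ j * (j : ℂ) ^ (2 * N + 1) *
        Complex.exp (-((2 * l + 1) * (j * κ))) := by
    rw [mul_pow, ← Complex.exp_nat_mul, show j * (π * Complex.I * ((2 * l + 1) * w) / (2 * v)) =
      -((2 * l + 1) * (j * κ)) by rw [hκdef]; ring]
    ring
  simp only [hterm] at hrow
  simp only [mul_left_comm (2 * (l : ℂ) + 1) (-Complex.I)]
  linear_combination (σ ^ l) * hrow

/-! ### The moment integrals -/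

lemma hyp_mul_hyp {σ : ℂ} (hσ : σ ^ 2 = 1) (x y : ℂ) :
    hyp σ x * hyp σ y = 2 * (Complex.cosh (x + y) - σ * Complex.cosh (x - y)) := by
  rw [mul_sub, mul_left_comm, Complex.two_cosh, Complex.two_cosh]
  simp only [hyp, neg_add, neg_neg, sub_eq_add_neg, Complex.exp_add]
  linear_combination Complex.exp (-x) * Complex.exp (-y) * hσ

theorem integral_div_cosh_sub_cosh {σ : ℂ} (hσ : σ ^ 2 = 1) (p q : ℂ) (N : ℕ) :
    ∫ x in Ioi (0 : ℝ), (x : ℂ) ^ N /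
      (Complex.cosh ((p + q) * √x) - σ * Complex.cosh ((p - q) * √x)) =
      4 * hypIntegral σ p q (2 * N + 1) := by
  rw [← integral_comp_rpow_Ioi_of_pos two_pos, hypIntegral, ← integral_const_mul]
  refine setIntegral_congr_fun measurableSet_Ioi fun t ht => ?_
  have hsqrt : √(t ^ 2) = t := Real.sqrt_sq (mem_Ioi.mp ht).le
  have htwo : (2 : ℝ) - 1 = 1 := by norm_num
  simp only [hyp_mul_hyp hσ, htwo, Real.rpow_one, Real.rpow_two, hsqrt, Complex.real_smul,
    ← add_mul, ← sub_mul]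
  push_cast
  rw [← div_div]
  ring

/-- The integral `∫₀^∞ x ^ N / (cosh (b√x) - σ cos (a√x)) dx`. -/
noncomputable def halfLineMoment (σ a b : ℂ) (N : ℕ) : ℂ :=
  ∫ x in Ioi (0 : ℝ), (x : ℂ) ^ N / (Complex.cosh (b * √x) - σ * Complex.cos (a * √x))

/-- The integral of `x ^ N / (cosh (b√x) - σ cos (a√x))` over the real line for `σ = ±1`. With
`√x = i√(-x)` for `x < 0`, the negative half-line contributes the half-line integral with `a` and
`b` exchanged. -/
noncomputable def lineMoment (σ a b : ℂ) (N : ℕ) : ℂ :=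
  halfLineMoment σ a b N - σ * (-1) ^ N * halfLineMoment σ b a N

theorem lineMoment_eq_lambertSum {σ a b : ℂ} {N : ℕ} (hσ : σ ^ 2 = 1) (ha : |b.im| < a.re)
    (hb : |a.im| < b.re) (hN : σ = 1 → 1 ≤ N) :
    lineMoment σ a b N = 4 * σ * (π / (a - Complex.I * b)) ^ (2 * N + 2) *
      lambertSum σ (-π * Complex.I * (a + Complex.I * b) / (2 * (a - Complex.I * b)))
        (2 * N + 1) := by
  obtain ⟨ha₁, ha₂⟩ := abs_lt.mp ha
  obtain ⟨hb₁, hb₂⟩ := abs_lt.mp hb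
  set w := (a + Complex.I * b) / 2 with hw
  set v := (a - Complex.I * b) / 2 with hv
  have hcosh (c : ℂ) (x : ℝ) : Complex.cosh (c * Complex.I * √x) = Complex.cos (c * √x) := by
    rw [mul_right_comm, Complex.cosh_mul_I]
  have hab : halfLineMoment σ a b N =
      4 * hypIntegral σ (-Complex.I * w) (Complex.I * v) (2 * N + 1) := by
    rw [← integral_div_cosh_sub_cosh hσ, halfLineMoment,
      show -Complex.I * w + Complex.I * v = b by
        rw [hw, hv]; linear_combination (-b) * Complex.I_sq,
      show -Complex.I * w - Complex.I * v = -(a * Complex.I) by rw [hw, hv]; ring]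
    simp only [neg_mul, Complex.cosh_neg, hcosh]
  have hba : halfLineMoment σ b a N = 4 * hypIntegral σ w v (2 * N + 1) := by
    rw [← integral_div_cosh_sub_cosh hσ, halfLineMoment, show w + v = a by rw [hw, hv]; ring,
      show w - v = b * Complex.I by rw [hw, hv]; ring]
    simp only [hcosh]
  have hsub := hypIntegral_sub (w := w) (v := v) hσ (by simp [hw]; linarith)
    (by simp [hw]; linarith) (by simp [hv]; linarith) (by simp [hv]; linarith) hN
  rw [lineMoment, hab, hba, show a - Complex.I * b = 2 * v by rw [hv]; ring,
    show a + Complex.I * b = 2 * w by rw [hw]; ring]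
  have hκ : -π * Complex.I * (2 * w) / (2 * (2 * v)) = -π * Complex.I * w / (2 * v) := by
    rw [mul_left_comm, mul_div_mul_left _ _ two_ne_zero]
  rw [hκ]
  linear_combination 4 * hsub

/-! ### Alternating sums of hyperbolic secants -/

lemma sinh_abs_re_le_norm_cosh (z : ℂ) : Real.sinh |z.re| ≤ ‖Complex.cosh z‖ := by
  have h := two_mul_sinh_abs_re_le_norm_hyp (by simp : ‖(-1 : ℂ)‖ = 1) z
  rwa [hyp_neg_one, norm_mul, Complex.norm_two, mul_le_mul_iff_right₀ two_pos] at h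

lemma sinh_abs_re_le_norm_sinh (z : ℂ) : Real.sinh |z.re| ≤ ‖Complex.sinh z‖ := by
  have h := two_mul_sinh_abs_re_le_norm_hyp (by simp : ‖(1 : ℂ)‖ = 1) z
  rwa [hyp_one, norm_mul, Complex.norm_two, mul_le_mul_iff_right₀ two_pos] at h

lemma cosh_ne_zero_of_re_ne_zero {z : ℂ} (hz : z.re ≠ 0) : Complex.cosh z ≠ 0 :=
  norm_pos_iff.mp ((Real.sinh_pos_iff.mpr (abs_pos.mpr hz)).trans_le (sinh_abs_re_le_norm_cosh z))

lemma sinh_ne_zero_of_re_ne_zero {z : ℂ} (hz : z.re ≠ 0) : Complex.sinh z ≠ 0 :=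
  norm_pos_iff.mp ((Real.sinh_pos_iff.mpr (abs_pos.mpr hz)).trans_le (sinh_abs_re_le_norm_sinh z))

lemma exp_mul_le_two_mul_sinh {δ x : ℝ} (h : δ ≤ x) :
    Real.exp x * (1 - Real.exp (-(2 * δ))) ≤ 2 * Real.sinh x := by
  have hexp : Real.exp (-x) = Real.exp x * Real.exp (-(2 * x)) := by
    rw [← Real.exp_add]; ring_nf
  rw [Real.sinh_eq, mul_div_cancel₀ _ two_ne_zero, hexp, ← mul_one_sub]
  gcongr

/-- The alternating hyperbolic secant `(-1) ^ r / cosh ((2r + 1) κ)` at the odd multiples of `κ`,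
indexed by all integers so that its odd symmetry under `r ↦ -(r + 1)` becomes available. -/
noncomputable def altSech (κ : ℂ) (r : ℤ) : ℂ := (-1) ^ r / Complex.cosh ((2 * r + 1) * κ)

lemma altSech_neg_add_one (κ : ℂ) (r : ℤ) : altSech κ (-(r + 1)) = -altSech κ r := by
  have hcosh : (2 * (-(r + 1) : ℤ) + 1) * κ = -((2 * r + 1) * κ) := by push_cast; ring
  rw [altSech, hcosh, Complex.cosh_neg, zpow_neg, ← inv_zpow, inv_neg_one,
    zpow_add_one₀ (by norm_num), mul_neg_one, neg_div, altSech]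

lemma re_odd_mul_ne_zero {κ : ℂ} (hκ : 0 < κ.re) (r : ℤ) : ((2 * r + 1) * κ : ℂ).re ≠ 0 := by
  rw [show ((2 * r + 1) * κ : ℂ).re = (2 * r + 1) * κ.re by simp]
  exact mul_ne_zero (mod_cast (by omega : 2 * r + 1 ≠ 0)) hκ.ne'

lemma norm_altSech_natCast_le {κ : ℂ} (hκ : 0 < κ.re) (r : ℕ) :
    ‖altSech κ r‖ ≤ 2 / (1 - Real.exp (-(2 * κ.re))) * Real.exp (-κ.re) ^ (2 * r + 1) := by
  have hgap : 0 < 1 - Real.exp (-(2 * κ.re)) := by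
    rw [sub_pos, Real.exp_lt_one_iff]; linarith
  have hle : κ.re ≤ (2 * r + 1) * κ.re := le_mul_of_one_le_left hκ.le (by simp)
  have hcosh : Real.exp ((2 * r + 1) * κ.re) * (1 - Real.exp (-(2 * κ.re))) ≤
      2 * ‖Complex.cosh ((2 * r + 1) * κ)‖ := by
    refine (exp_mul_le_two_mul_sinh hle).trans (mul_le_mul_of_nonneg_left ?_ zero_le_two)
    simpa [abs_of_pos hκ, abs_of_nonneg (by positivity : (0 : ℝ) ≤ 2 * r + 1), abs_mul] using
      sinh_abs_re_le_norm_cosh ((2 * r + 1) * κ)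
  have hexp : Real.exp (-κ.re) ^ (2 * r + 1) = (Real.exp ((2 * r + 1) * κ.re))⁻¹ := by
    rw [← Real.exp_nat_mul, ← Real.exp_neg]
    push_cast
    ring_nf
  have hpos : 0 < ‖Complex.cosh ((2 * r + 1) * κ)‖ := by
    linarith [(mul_pos (Real.exp_pos _) hgap).trans_le hcosh]
  rw [altSech, norm_div, norm_zpow, norm_neg, norm_one, one_zpow, hexp, ← div_eq_mul_inv, div_div,
    Int.cast_natCast, div_le_div_iff₀ hpos (by positivity)]
  linarith

lemma summable_norm_altSech_mul_odd_pow {κ : ℂ} (hκ : 0 < κ.re) (m : ℕ) :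
    Summable fun r : ℤ => ‖altSech κ r * (2 * r + 1) ^ m‖ := by
  have hρ : ‖Real.exp (-κ.re)‖ < 1 := by
    rw [Real.norm_of_nonneg (Real.exp_pos _).le, Real.exp_lt_one_iff]
    linarith
  have hmaj := ((summable_pow_mul_geometric_of_norm_lt_one m hρ).comp_injective
    two_mul_add_one_injective).mul_left (2 / (1 - Real.exp (-(2 * κ.re))))
  have hnat : Summable fun r : ℕ => ‖altSech κ r * (2 * r + 1) ^ m‖ := by
    refine .of_nonneg_of_le (fun r => norm_nonneg _) (fun r => ?_) hmaj
    rw [norm_mul, norm_pow, Function.comp_apply, mul_left_comm, mul_comm]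
    have hnorm : ‖(2 * r + 1 : ℂ)‖ = (2 * r + 1 : ℕ) := by
      rw [← Complex.norm_natCast]; push_cast; rfl
    rw [hnorm]
    gcongr
    exact norm_altSech_natCast_le hκ r
  refine .of_nat_of_neg_add_one (by simpa using hnat) (hnat.congr fun r => ?_)
  rw [altSech_neg_add_one, norm_mul, norm_mul, norm_neg, norm_pow, norm_pow,
    show (2 * (-(r + 1 : ℤ) : ℤ) + 1 : ℂ) = -(2 * r + 1) by push_cast; ring, norm_neg]

/-- The moment `∑ (-1) ^ r (2r + 1) ^ m / cosh ((2r + 1) κ)` of `altSech κ`. -/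
noncomputable def sechSum (κ : ℂ) (m : ℕ) : ℂ := ∑' r : ℤ, altSech κ r * (2 * r + 1) ^ m

lemma sechSum_eq_tsum_nat {κ : ℂ} (hκ : 0 < κ.re) (m : ℕ) :
    sechSum κ m = ∑' r : ℕ, (1 - (-1) ^ m) * (altSech κ r * (2 * r + 1) ^ m) := by
  rw [sechSum, ← tsum_nat_add_neg_add_one (summable_norm_altSech_mul_odd_pow hκ m).of_norm]
  refine tsum_congr fun r => ?_
  rw [altSech_neg_add_one,
    show (2 * (-(r + 1 : ℤ) : ℤ) + 1 : ℂ) = -(2 * r + 1) by push_cast; ring, neg_pow]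
  push_cast
  ring

lemma sechSum_of_even {κ : ℂ} (hκ : 0 < κ.re) {m : ℕ} (hm : Even m) : sechSum κ m = 0 := by
  simp [sechSum_eq_tsum_nat hκ, hm.neg_one_pow]

lemma lambertSum_neg_one {κ : ℂ} (hκ : 0 < κ.re) {n : ℕ} (hn : Odd n) :
    lambertSum (-1) κ n = Complex.I / 2 * sechSum κ n := by
  rw [lambertSum, sechSum_eq_tsum_nat hκ, ← tsum_mul_left, ← two_mul_add_one_injective.tsum_eq]
  · refine tsum_congr fun r => ?_
    rw [hyp_neg_one, altSech, hn.neg_one_pow, (odd_two_mul_add_one r).neg_one_pow, pow_succ,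
      pow_mul, Complex.I_sq]
    push_cast
    rw [zpow_natCast]
    ring
  · refine Function.support_subset_iff'.mpr fun j hj => ?_
    have heven : Even j := Nat.not_odd_iff_even.mp fun ⟨r, hr⟩ => hj ⟨r, hr.symm⟩
    simp [heven.neg_one_pow]

lemma lambertSum_one (κ : ℂ) (n : ℕ) :
    lambertSum 1 κ n = ∑' s : ℕ, (-1) ^ s * (2 * s : ℂ) ^ n / Complex.sinh (2 * s * κ) := by
  have heven : Function.Injective fun s : ℕ => 2 * s := fun a b h => by simpa using h
  rw [lambertSum, ← heven.tsum_eq]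
  · refine tsum_congr fun s => ?_
    rw [hyp_one, (even_two_mul s).neg_one_pow, pow_mul, Complex.I_sq]
    push_cast
    ring
  · refine Function.support_subset_iff'.mpr fun j hj => ?_
    have hodd : Odd j := Nat.not_even_iff_odd.mp fun h => hj (h.imp fun s hs => by simp only; omega)
    simp [hodd.neg_one_pow]

/-! ### The convolution of Lambert series -/

lemma hasSum_sub_shift {E : Type*} [AddCommGroup E] [TopologicalSpace E] [IsTopologicalAddGroup E]
    {f : ℤ → E} {S : E} (h : HasSum (fun r => f r - f (r - 1)) S) (N : ℤ) :
    HasSum (fun r => f r - f (r - N)) (N • S) := by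
  have hshift (k : ℤ) : HasSum (fun r => f (r - k) - f (r - k - 1)) S :=
    (Equiv.subRight k).hasSum_iff.mpr h
  induction N with
  | zero => simp
  | succ N ih =>
    rw [add_smul, one_smul]
    refine (ih.add (hshift N)).congr_fun fun r => ?_
    rw [sub_sub, sub_add_sub_cancel]
  | pred N ih =>
    rw [sub_smul, one_smul]
    refine (ih.sub (hshift (-N - 1))).congr_fun fun r => ?_
    rw [show r - (-N - 1 : ℤ) - 1 = r - -N by ring, sub_sub_sub_cancel_right]

lemma tanh_sub_tanh {a b : ℂ} (ha : Complex.cosh a ≠ 0) (hb : Complex.cosh b ≠ 0) :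
    Complex.tanh a - Complex.tanh b =
      Complex.sinh (a - b) / (Complex.cosh a * Complex.cosh b) := by
  rw [Complex.tanh_eq_sinh_div_cosh, Complex.tanh_eq_sinh_div_cosh, div_sub_div _ _ ha hb,
    Complex.sinh_sub]

lemma tanh_sub_one {z : ℂ} (hz : Complex.cosh z ≠ 0) :
    Complex.tanh z - 1 = -Complex.exp (-z) / Complex.cosh z := by
  rw [Complex.tanh_eq_sinh_div_cosh, div_sub_one hz, Complex.sinh_sub_cosh]

lemma summable_tanh_sub_sign {κ : ℂ} (hκ : 0 < κ.re) :
    Summable fun r : ℤ => Complex.tanh ((2 * r + 1) * κ) - (2 * r + 1).sign := by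
  have hsech : Summable fun r : ℕ => ‖altSech κ r‖ := by
    simpa [Function.comp_def] using
      (summable_norm_altSech_mul_odd_pow hκ 0).comp_injective Nat.cast_injective
  have hnat : Summable fun r : ℕ => Complex.tanh ((2 * r + 1) * κ) - 1 := by
    refine .of_norm_bounded hsech fun r => ?_
    have hcosh := cosh_ne_zero_of_re_ne_zero (re_odd_mul_ne_zero hκ r)
    rw [Int.cast_natCast] at hcosh
    rw [tanh_sub_one hcosh, altSech, norm_div, norm_div, norm_neg, norm_zpow, norm_neg, norm_one,
      one_zpow, Complex.norm_exp, Int.cast_natCast]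
    gcongr
    have : 0 ≤ (2 * r + 1) * κ.re := by positivity
    simpa using this
  refine .of_nat_of_neg_add_one (hnat.congr fun r => ?_) (hnat.neg.congr fun r => ?_)
  · rw [Int.sign_eq_one_of_pos (by omega)]
    simp
  · rw [Int.sign_eq_neg_one_of_neg (by omega),
      show (2 * (-(r + 1 : ℤ) : ℤ) + 1 : ℂ) = -(2 * r + 1) by push_cast; ring, neg_mul,
      Complex.tanh_neg]
    push_cast
    ring

lemma hasSum_tanh_sub_tanh {κ : ℂ} (hκ : 0 < κ.re) :
    HasSum (fun r : ℤ => Complex.tanh ((2 * r + 1) * κ) -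
      Complex.tanh ((2 * (r - 1 : ℤ) + 1) * κ)) 2 := by
  have hsign : HasSum (fun r : ℤ => ((2 * r + 1).sign - (2 * (r - 1) + 1).sign : ℂ)) 2 := by
    have hjump (r : ℤ) (hr : r ≠ 0) : ((2 * r + 1).sign - (2 * (r - 1) + 1).sign : ℂ) = 0 := by
      rcases hr.lt_or_gt with hneg | hpos
      · rw [Int.sign_eq_neg_one_of_neg (by omega), Int.sign_eq_neg_one_of_neg (by omega), sub_self]
      · rw [Int.sign_eq_one_of_pos (by omega), Int.sign_eq_one_of_pos (by omega), sub_self]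
    convert! hasSum_single 0 hjump using 1
    norm_num
  have h := (summable_tanh_sub_sign hκ).hasSum
  have hsum := (h.sub ((Equiv.subRight 1).hasSum_iff.mpr h)).add hsign
  rw [sub_self, zero_add] at hsum
  refine hsum.congr_fun fun r => ?_
  simp only [Function.comp_apply, Equiv.subRight_apply]
  ring

/-- Each product is a difference of two values of `tanh`, so the sum telescopes. -/
theorem hasSum_altSech_mul_altSech {κ : ℂ} (hκ : 0 < κ.re) {N : ℤ} (hN : N ≠ 0) :
    HasSum (fun r => altSech κ r * altSech κ (N - 1 - r))
      (-((-1) ^ N * (2 * N) / Complex.sinh (2 * N * κ))) := by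
  have hsinh : Complex.sinh (2 * N * κ) ≠ 0 :=
    sinh_ne_zero_of_re_ne_zero (by simp [hN, hκ.ne'])
  have hterm (r : ℤ) : altSech κ r * altSech κ (N - 1 - r) =
      -((-1) ^ N / Complex.sinh (2 * N * κ)) *
        (Complex.tanh ((2 * r + 1) * κ) - Complex.tanh ((2 * (r - N : ℤ) + 1) * κ)) := by
    have hsign : (-1 : ℂ) ^ r * (-1) ^ (N - 1 - r) = -(-1) ^ N := by
      rw [← zpow_add₀ (by norm_num), add_sub_cancel, zpow_sub_one₀ (by norm_num), inv_neg_one,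
        mul_neg_one]
    have hcosh : Complex.cosh ((2 * (N - 1 - r : ℤ) + 1) * κ) =
        Complex.cosh ((2 * (r - N : ℤ) + 1) * κ) := by
      rw [← Complex.cosh_neg]
      push_cast
      ring_nf
    have hdiff : (2 * r + 1) * κ - (2 * (r - N : ℤ) + 1) * κ = 2 * N * κ := by push_cast; ring
    rw [tanh_sub_tanh (cosh_ne_zero_of_re_ne_zero (re_odd_mul_ne_zero hκ r))
      (cosh_ne_zero_of_re_ne_zero (re_odd_mul_ne_zero hκ (r - N))), hdiff, altSech, altSech,
      div_mul_div_comm, hsign, hcosh, ← mul_div_assoc, neg_mul, div_mul_cancel₀ _ hsinh]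
  convert! ((hasSum_sub_shift (hasSum_tanh_sub_tanh hκ) N).mul_left _).congr_fun hterm using 1
  rw [zsmul_eq_mul]
  ring

/-- Write `(x + y) ^ (n + 1) = (x + y) ^ n * y + (x + y) ^ n * x`: the binomial theorem expands the
first half, and the second half is its image under the swap of the two indices. -/
theorem hasSum_mul_add_pow_succ {ι : Type*} {u x : ι → ℂ}
    (hu : ∀ m, Summable fun r => ‖u r * x r ^ m‖) (n : ℕ) :
    HasSum (fun p : ι × ι => u p.1 * u p.2 * (x p.1 + x p.2) ^ (n + 1))
      (2 * ∑ j ∈ Finset.range (n + 1), (n.choose j : ℂ) *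
        (∑' r, u r * x r ^ j) * ∑' r, u r * x r ^ (n - j + 1)) := by
  have hprod (i j : ℕ) : HasSum (fun p : ι × ι => (u p.1 * x p.1 ^ i) * (u p.2 * x p.2 ^ j))
      ((∑' r, u r * x r ^ i) * ∑' r, u r * x r ^ j) := by
    rw [tsum_mul_tsum_of_summable_norm (hu i) (hu j)]
    exact (summable_mul_of_summable_norm (hu i) (hu j)).hasSum
  have hbinom : HasSum (fun p : ι × ι => u p.1 * (u p.2 * x p.2) * (x p.1 + x p.2) ^ n)
      (∑ j ∈ Finset.range (n + 1), (n.choose j : ℂ) *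
        (∑' r, u r * x r ^ j) * ∑' r, u r * x r ^ (n - j + 1)) := by
    simp only [mul_assoc (_ : ℂ) (tsum _)]
    refine (hasSum_sum fun j _ => (hprod j (n - j + 1)).mul_left (n.choose j : ℂ)).congr_fun
      fun p => ?_
    rw [add_pow, Finset.mul_sum]
    exact Finset.sum_congr rfl fun j _ => by ring
  rw [two_mul]
  refine (hbinom.add ((Equiv.prodComm ι ι).hasSum_iff.mpr hbinom)).congr_fun fun p => ?_
  simp only [Function.comp_apply, Equiv.prodComm_apply, Prod.fst_swap, Prod.snd_swap]
  ring

lemma hasSum_altSech_mul_altSech_mul_pow {κ : ℂ} (hκ : 0 < κ.re) (N : ℤ) {m : ℕ} (hm : m ≠ 0) :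
    HasSum (fun r => altSech κ r * altSech κ (N - 1 - r) * (2 * N) ^ m)
      (-((-1) ^ N * (2 * N) ^ (m + 1) / Complex.sinh (2 * N * κ))) := by
  rcases eq_or_ne N 0 with rfl | hN
  · simp [hm, hasSum_zero]
  convert! (hasSum_altSech_mul_altSech hκ hN).mul_right _ using 1
  ring

/-- The bijection `(N, r) ↦ (r, N - 1 - r)`, whose fibres over `N` are the antidiagonals on which
`(2r + 1) + (2s + 1)` is the constant `2N`. -/
def antidiagonalEquiv : ℤ × ℤ ≃ ℤ × ℤ where
  toFun p := (p.2, p.1 - 1 - p.2)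
  invFun p := (p.1 + p.2 + 1, p.1)
  left_inv p := by ext <;> simp
  right_inv p := by ext <;> simp

lemma hasSum_int_pow_div_sinh {κ : ℂ} (hκ : 0 < κ.re) (n : ℕ) :
    HasSum (fun N : ℤ => -((-1) ^ N * (2 * N : ℂ) ^ (n + 2) / Complex.sinh (2 * N * κ)))
      (2 * ∑ j ∈ Finset.range (n + 1), (n.choose j : ℂ) * sechSum κ j * sechSum κ (n - j + 1)) := by
  have hdouble := hasSum_mul_add_pow_succ (u := altSech κ) (x := fun r : ℤ => (2 * r + 1 : ℂ))
    (summable_norm_altSech_mul_odd_pow hκ) n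
  refine (antidiagonalEquiv.hasSum_iff.mpr hdouble).prod_fiberwise fun N => ?_
  refine (hasSum_altSech_mul_altSech_mul_pow hκ N n.add_one_ne_zero).congr_fun fun r => ?_
  simp only [Function.comp_apply, antidiagonalEquiv, Equiv.coe_fn_mk]
  push_cast
  ring

lemma sum_range_two_mul {E : Type*} [AddCommMonoid E] (f : ℕ → E) (n : ℕ) :
    ∑ j ∈ Finset.range (2 * n), f j = ∑ p ∈ Finset.range n, (f (2 * p) + f (2 * p + 1)) := by
  induction n with
  | zero => simp
  | succ n ih => rw [mul_add_one, Finset.sum_range_succ, Finset.sum_range_succ, ih,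
      Finset.sum_range_succ, add_assoc]

theorem lambertSum_one_eq_sum_sechSum {κ : ℂ} (hκ : 0 < κ.re) (n : ℕ) :
    lambertSum 1 κ (2 * n + 3) = -∑ p ∈ Finset.range (n + 1),
      ((2 * n + 1).choose (2 * p + 1) : ℂ) * sechSum κ (2 * p + 1) *
        sechSum κ (2 * (n - p) + 1) := by
  have hlambert : HasSum
      (fun s : ℕ => (-1) ^ s * (2 * s : ℂ) ^ (2 * n + 3) / Complex.sinh (2 * s * κ))
      (-∑ j ∈ Finset.range (2 * n + 1 + 1),
        ((2 * n + 1).choose j : ℂ) * sechSum κ j * sechSum κ (2 * n + 1 - j + 1)) := by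
    convert! (hasSum_int_pow_div_sinh hκ (2 * n + 1)).nat_add_neg.mul_left (-1 / 2) using 1
    · ext s
      have hodd : Odd (2 * n + 1 + 2) := ⟨n + 1, by ring⟩
      push_cast
      rw [zpow_neg, ← inv_zpow, inv_neg_one, zpow_natCast, mul_neg, neg_mul, Complex.sinh_neg,
        hodd.neg_pow]
      ring
    · rw [Int.cast_zero, mul_zero, zero_mul, Complex.sinh_zero, div_zero, neg_zero, add_zero]
      ring
  rw [lambertSum_one, hlambert.tsum_eq, show 2 * n + 1 + 1 = 2 * (n + 1) by ring, sum_range_two_mul]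
  congr 1
  refine Finset.sum_congr rfl fun p hp => ?_
  have hp : p ≤ n := Finset.mem_range_succ_iff.mp hp
  rw [sechSum_of_even hκ (even_two_mul p),
    show 2 * n + 1 - (2 * p + 1) + 1 = 2 * (n - p) + 1 by omega]
  ring

theorem lambertSum_convolution {κ : ℂ} (hκ : 0 < κ.re) (n : ℕ) :
    lambertSum 1 κ (2 * n + 3) = 4 * ∑ p ∈ Finset.range (n + 1),
      ((2 * n + 1).choose (2 * p + 1) : ℂ) * lambertSum (-1) κ (2 * p + 1) *
        lambertSum (-1) κ (2 * (n - p) + 1) := by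
  rw [lambertSum_one_eq_sum_sechSum hκ, ← Finset.sum_neg_distrib, Finset.mul_sum]
  refine Finset.sum_congr rfl fun p _ => ?_
  rw [lambertSum_neg_one hκ (odd_two_mul_add_one p), lambertSum_neg_one hκ (odd_two_mul_add_one _)]
  linear_combination (-((2 * n + 1).choose (2 * p + 1) : ℂ) * sechSum κ (2 * p + 1) *
    sechSum κ (2 * (n - p) + 1)) * Complex.I_sq

theorem Iminus_binomial_convolution_general {a b : ℂ} (ha : |b.im| < a.re) (hb : |a.im| < b.re)
    (n : ℕ) :
    lineMoment 1 a b (n + 1) = ∑ p ∈ Finset.range (n + 1),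
      ((2 * n + 1).choose (2 * p + 1) : ℂ) * lineMoment (-1) a b p *
        lineMoment (-1) a b (n - p) := by
  obtain ⟨hlb, hub⟩ := abs_lt.mp ha
  obtain ⟨hla, hua⟩ := abs_lt.mp hb
  set κ := -π * Complex.I * (a + Complex.I * b) / (2 * (a - Complex.I * b)) with hκdef
  have hκ : 0 < κ.re := by
    apply neg_pi_mul_I_mul_div_re_pos <;> simp <;> linarith
  have heval (N : ℕ) : lineMoment (-1) a b N =
      -4 * (π / (a - Complex.I * b)) ^ (2 * N + 2) * lambertSum (-1) κ (2 * N + 1) := by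
    rw [lineMoment_eq_lambertSum (by norm_num) ha hb (by norm_num), mul_neg_one]
  rw [lineMoment_eq_lambertSum (one_pow 2) ha hb (fun _ => Nat.le_add_left 1 n), ← hκdef,
    show 2 * (n + 1) + 1 = 2 * n + 3 by ring, lambertSum_convolution hκ, Finset.mul_sum,
    Finset.mul_sum]
  refine Finset.sum_congr rfl fun p hp => ?_
  have hp : p ≤ n := Finset.mem_range_succ_iff.mp hp
  rw [heval, heval, show 2 * (n + 1) + 2 = (2 * p + 2) + (2 * (n - p) + 2) by omega, pow_add]
  ring

lemma ellipticK_pos {k : ℝ} (hk : k ^ 2 < 1) : 0 < ellipticK k := by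
  have hpos (θ : ℝ) : 0 < 1 - k ^ 2 * Real.sin θ ^ 2 := by
    nlinarith [Real.sin_sq_le_one θ, sq_nonneg k]
  have hcont : Continuous fun θ : ℝ => (1 - k ^ 2 * Real.sin θ ^ 2) ^ (-(1 / 2) : ℝ) :=
    Continuous.rpow_const (by fun_prop) fun θ => Or.inl (hpos θ).ne'
  exact intervalIntegral.intervalIntegral_pos_of_pos (hcont.intervalIntegrable _ _)
    (fun θ => Real.rpow_pos_of_pos (hpos θ) _) pi_div_two_pos

lemma ofReal_Iplus (k : ℝ) (n : ℕ) :
    (Iplus k n : ℂ) = lineMoment (-1) (ellipticK k) (ellipticK √(1 - k ^ 2)) n / 2 := by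
  simp only [Iplus, lineMoment, halfLineMoment, add_comm (Real.cos _)]
  push_cast [← integral_complex_ofReal]
  simp only [neg_one_mul, sub_neg_eq_add]
  ring

lemma ofReal_Iminus (k : ℝ) (n : ℕ) :
    (Iminus k n : ℂ) = -lineMoment 1 (ellipticK k) (ellipticK √(1 - k ^ 2)) (n + 1) := by
  have hneg (x c d : ℝ) : x ^ (n + 1) / (c - d) = -(x ^ (n + 1) / (d - c)) := by
    rw [← div_neg, neg_sub]
  simp only [Iminus, lineMoment, halfLineMoment, hneg _ (Real.cos _), integral_neg]
  push_cast [← integral_complex_ofReal]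
  simp only [one_mul]
  ring

theorem Iminus_binomial_convolution (k : ℝ) (hk : k ∈ Set.Ioo (0 : ℝ) 1) (n : ℕ) :
    Iminus k n =
      -4 * ∑ p ∈ Finset.range (n + 1),
        (Nat.choose (2 * n + 1) (2 * p + 1) : ℝ) * Iplus k p * Iplus k (n - p) := by
  have hk2 : k ^ 2 < 1 := pow_lt_one₀ hk.1.le hk.2 two_ne_zero
  have hK := ellipticK_pos hk2
  have hK' : 0 < ellipticK √(1 - k ^ 2) := ellipticK_pos <| by
    rw [Real.sq_sqrt (sub_nonneg.mpr hk2.le)]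
    linarith [pow_pos hk.1 2]
  apply Complex.ofReal_injective
  push_cast [ofReal_Iminus, ofReal_Iplus]
  rw [Iminus_binomial_convolution_general (by simpa using hK) (by simpa using hK'), Finset.mul_sum,
    ← Finset.sum_neg_distrib]
  exact Finset.sum_congr rfl fun p _ => by ring
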